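/- Let T ≥ 1 be an integer, m ≥ 1 an integer, and let L > 0, G ≥ 0, σ ≥ 0, S_w ≥ 0 be reals, p ∈ (0,1], γ ∈ [0,1) with γ' = 1 − γ, and ρ_min ∈ (0,1]. Set η = ρ_min/√(4LT), η̄ = 1/√(4LT) and ζ = T^{-3/8}. Let F : {0,1,…,T} → ℝ and b, a : {1,…,T} → ℝ with b_t ≥ 0 and a_t ≥ 0, and let F* ∈ ℝ satisfy F* ≤ F_t for all t. Suppose that for every 1 ≤ t ≤ T: (i) F_t ≤ F_{t-1} − (ηγ'/2)·b_t + σ²/(8mT) + (ηL²/(2m))·a_t + (Lζ²/(2m²))·S_w, and (ii) a_t ≤ 12mG²η̄²/(pζ)² + 2ζS_w/p. Then (1/T)·Σ_{t=1}^{T} b_t ≤ 8√L·(F_0 − F*)/(γ'·ρ_min·√T) + 3G²L/(T^{1/4}·p²·γ') + √(L/(4T))·σ²/(m·γ'·ρ_min) + (S_w/(m·γ'))·( 2L²/(p·T^{3/8}) + 4L^{3/2}/(m·T^{1/4}·ρ_min) ). -/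

import Mathlib

/-!
Summing the descent inequality telescopes `F`, so the average of `b` is at most
`(F 0 - F T) / (c T)` plus the per-step error divided by the descent rate `c = η γ' / 2`.
With `η̄ = 1 / √(4 L T)` and `ζ = T ^ (-3/8)`, the quantities `(η̄ / ζ) ^ 2` and `ζ ^ 2 / η̄`
are both of order `T ^ (-1/4)`: the exponent `3/8` balances the consensus error caused by
mixing slowly against the communication noise let in by mixing fast.
-/

theorem sum_Icc_le_of_descent {A : Type*} [AddCommGroup A] [PartialOrder A]
    [IsOrderedAddMonoid A] {F g e : ℕ → A} {T : ℕ}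
    (h : ∀ t ∈ Finset.Icc 1 T, F t ≤ F (t - 1) - g t + e t) :
    ∑ t ∈ Finset.Icc 1 T, g t ≤ F 0 - F T + ∑ t ∈ Finset.Icc 1 T, e t := by
  have telescope : ∑ t ∈ Finset.Icc 1 T, (F (t - 1) - F t) = F 0 - F T := by
    rw [← Finset.sum_range_sub' F T, ← Finset.Ico_add_one_right_eq_Icc,
      Finset.sum_Ico_eq_sum_range]
    simp only [add_tsub_cancel_right, add_comm 1]
  rw [← telescope, ← Finset.sum_add_distrib]
  refine Finset.sum_le_sum fun t ht => ?_
  calc g t = F t + (g t - F t) := by abel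
    _ ≤ F (t - 1) - g t + e t + (g t - F t) := by gcongr; exact h t ht
    _ = F (t - 1) - F t + e t := by abel

theorem average_le_of_descent {K : Type*} [Field K] [LinearOrder K] [IsStrictOrderedRing K]
    {F b : ℕ → K} {c ε : K} {T : ℕ} (hT : 1 ≤ T) (hc : 0 < c)
    (h : ∀ t ∈ Finset.Icc 1 T, F t ≤ F (t - 1) - c * b t + ε) :
    1 / (T : K) * ∑ t ∈ Finset.Icc 1 T, b t ≤ (F 0 - F T) / (c * T) + ε / c := by
  have : (0 : K) < T := by exact_mod_cast hT
  have total : c * ∑ t ∈ Finset.Icc 1 T, b t ≤ F 0 - F T + T * ε := by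
    simpa [Finset.mul_sum] using sum_Icc_le_of_descent h
  calc 1 / (T : K) * ∑ t ∈ Finset.Icc 1 T, b t
      = (c * ∑ t ∈ Finset.Icc 1 T, b t) / (c * T) := by field_simp
    _ ≤ (F 0 - F T + T * ε) / (c * T) := by gcongr
    _ = (F 0 - F T) / (c * T) + ε / c := by field_simp

theorem average_le_of_descent_of_consensus {T : ℕ} {m L σ Sw γ' η ζ A : ℝ} {F b a : ℕ → ℝ}
    (hT : 1 ≤ T) (hm : 0 < m) (hγ' : 0 < γ') (hη : 0 < η)
    (hdesc : ∀ t, 1 ≤ t → t ≤ T →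
      F t ≤ F (t - 1) - η * γ' / 2 * b t + σ ^ 2 / (8 * m * T)
        + η * L ^ 2 / (2 * m) * a t + L * ζ ^ 2 / (2 * m ^ 2) * Sw)
    (hcons : ∀ t, 1 ≤ t → t ≤ T → a t ≤ A) :
    1 / (T : ℝ) * ∑ t ∈ Finset.Icc 1 T, b t ≤
      (2 * (F 0 - F T) / γ' + σ ^ 2 / (4 * m * γ')) * (1 / (η * T))
        + L ^ 2 / (m * γ') * A + L * Sw / (m ^ 2 * γ') * (ζ ^ 2 / η) := by
  have : (0 : ℝ) < T := by exact_mod_cast hT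
  have uniform_descent : ∀ t ∈ Finset.Icc 1 T, F t ≤ F (t - 1) - η * γ' / 2 * b t
      + (σ ^ 2 / (8 * m * T) + η * L ^ 2 / (2 * m) * A + L * ζ ^ 2 / (2 * m ^ 2) * Sw) := by
    intro t ht
    obtain ⟨one_le_t, t_le_T⟩ := Finset.mem_Icc.mp ht
    have consensus : η * L ^ 2 / (2 * m) * a t ≤ η * L ^ 2 / (2 * m) * A := by
      gcongr
      exact hcons t one_le_t t_le_T
    linarith [hdesc t one_le_t t_le_T]
  refine (average_le_of_descent hT (by positivity) uniform_descent).trans_eq ?_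
  field_simp
  ring

section Rates

variable {L x : ℝ}

theorem sqrt_four_mul (y : ℝ) : √(4 * y) = 2 * √y := by
  rw [Real.sqrt_mul zero_le_four, show (4 : ℝ) = 2 ^ 2 by norm_num, Real.sqrt_sq zero_le_two]

theorem sqrt_div_four_mul (hL : 0 ≤ L) : √(L / (4 * x)) = √L / (2 * √x) := by
  rw [Real.sqrt_div hL, sqrt_four_mul]

theorem sqrt_four_mul_mul (hL : 0 ≤ L) : √(4 * L * x) = 2 * (√L * √x) := by
  rw [mul_assoc, sqrt_four_mul, Real.sqrt_mul hL]

theorem one_div_stepsize_mul_horizon (hL : 0 ≤ L) (ρ : ℝ) :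
    1 / (ρ / √(4 * L * x) * x) = 2 * √L / (ρ * √x) := by
  calc 1 / (ρ / √(4 * L * x) * x) = 2 * √L / ρ * (√x / x) := by
        rw [sqrt_four_mul_mul hL]
        field_simp
    _ = 2 * √L / (ρ * √x) := by rw [Real.sqrt_div_self, ← div_eq_mul_inv, div_div]

theorem sqrt_eq_rpow_one_fourth_sq (hx : 0 ≤ x) : √x = (x ^ (1 / 4 : ℝ)) ^ 2 := by
  rw [Real.sqrt_eq_rpow, ← Real.rpow_mul_natCast hx]
  norm_num

theorem rpow_neg_three_eighths_sq (hx : 0 < x) :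
    (x ^ (-(3 / 8 : ℝ))) ^ 2 = 1 / (√x * x ^ (1 / 4 : ℝ)) := by
  rw [Real.sqrt_eq_rpow, ← Real.rpow_add hx, ← Real.rpow_mul_natCast hx.le, one_div,
    ← Real.rpow_neg hx.le]
  norm_num

theorem mixing_sq_div_stepsize (hL : 0 ≤ L) (hx : 0 < x) (ρ : ℝ) :
    (x ^ (-(3 / 8 : ℝ))) ^ 2 / (ρ / √(4 * L * x)) = 2 * √L / (ρ * x ^ (1 / 4 : ℝ)) := by
  rw [rpow_neg_three_eighths_sq hx, sqrt_four_mul_mul hL]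
  field_simp

theorem stepsize_sq_div_mixing_sq (hL : 0 ≤ L) (hx : 0 < x) :
    (1 / √(4 * L * x)) ^ 2 / (x ^ (-(3 / 8 : ℝ))) ^ 2 = 1 / (4 * L * x ^ (1 / 4 : ℝ)) := by
  have hsqrt : √(4 * L * x) ^ 2 = 4 * L * √x ^ 2 := by
    rw [Real.sq_sqrt (by positivity), Real.sq_sqrt hx.le]
  rw [rpow_neg_three_eighths_sq hx, div_pow, hsqrt, sqrt_eq_rpow_one_fourth_sq hx.le]
  field_simp

end Rates

theorem async_dsgd_convergence_general
    (T : ℕ) (hT : 1 ≤ T) (m L G σ Sw p γ ρmin γ' η ηbar ζ : ℝ)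
    (hm : 0 < m) (hL : 0 < L) (hp : p ≠ 0)
    (hγ1 : γ < 1) (hγ' : γ' = 1 - γ) (hρ : 0 < ρmin)
    (hη : η = ρmin / Real.sqrt (4 * L * T))
    (hηbar : ηbar = 1 / Real.sqrt (4 * L * T))
    (hζ : ζ = (T : ℝ) ^ (-(3 / 8 : ℝ)))
    (F b a : ℕ → ℝ) (Fstar : ℝ) (hFstar : Fstar ≤ F T)
    (hdesc : ∀ t, 1 ≤ t → t ≤ T →
      F t ≤ F (t - 1) - η * γ' / 2 * b t + σ ^ 2 / (8 * m * T)
        + η * L ^ 2 / (2 * m) * a t + L * ζ ^ 2 / (2 * m ^ 2) * Sw)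
    (hcons : ∀ t, 1 ≤ t → t ≤ T →
      a t ≤ 12 * m * G ^ 2 * ηbar ^ 2 / (p * ζ) ^ 2 + 2 * ζ * Sw / p) :
    (1 / T : ℝ) * ∑ t ∈ Finset.Icc 1 T, b t ≤
      4 * Real.sqrt L * (F 0 - Fstar) / (γ' * ρmin * Real.sqrt T)
      + 3 * G ^ 2 * L / ((T : ℝ) ^ ((1 : ℝ) / 4) * p ^ 2 * γ')
      + Real.sqrt (L / (4 * T)) * σ ^ 2 / (m * γ' * ρmin)
      + Sw / (m * γ') *
          (2 * L ^ 2 / (p * (T : ℝ) ^ ((3 : ℝ) / 8))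
            + 2 * L * Real.sqrt L / (m * (T : ℝ) ^ ((1 : ℝ) / 4) * ρmin)) := by
  have hT' : (0 : ℝ) < T := by exact_mod_cast hT
  have hγ'0 : 0 < γ' := by linarith
  have hη0 : 0 < η := by rw [hη]; positivity
  have hζ0 : 0 < ζ := by rw [hζ]; positivity
  calc (1 / T : ℝ) * ∑ t ∈ Finset.Icc 1 T, b t
      ≤ (2 * (F 0 - F T) / γ' + σ ^ 2 / (4 * m * γ')) * (1 / (η * T))
          + L ^ 2 / (m * γ') * (12 * m * G ^ 2 * ηbar ^ 2 / (p * ζ) ^ 2 + 2 * ζ * Sw / p)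
          + L * Sw / (m ^ 2 * γ') * (ζ ^ 2 / η) :=
        average_le_of_descent_of_consensus hT hm hγ'0 hη0 hdesc hcons
    _ ≤ (2 * (F 0 - Fstar) / γ' + σ ^ 2 / (4 * m * γ')) * (1 / (η * T))
          + L ^ 2 / (m * γ') * (12 * m * G ^ 2 * ηbar ^ 2 / (p * ζ) ^ 2 + 2 * ζ * Sw / p)
          + L * Sw / (m ^ 2 * γ') * (ζ ^ 2 / η) := by gcongr
    _ = (2 * (F 0 - Fstar) / γ' + σ ^ 2 / (4 * m * γ')) * (1 / (η * T))
          + 12 * L ^ 2 * G ^ 2 / (p ^ 2 * γ') * (ηbar ^ 2 / ζ ^ 2)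
          + Sw / (m * γ') * (2 * L ^ 2 / p * ζ + L / m * (ζ ^ 2 / η)) := by
        field_simp
        ring
    _ = _ := by
        rw [hη, hηbar, hζ, one_div_stepsize_mul_horizon hL.le,
          stepsize_sq_div_mixing_sq hL.le hT', mixing_sq_div_stepsize hL.le hT',
          Real.rpow_neg hT'.le, sqrt_div_four_mul hL.le]
        field_simp
        ring

/-- Deterministic core of Theorem 1: convergence of asynchronous decentralized SGD. -/
theorem async_dsgd_convergence
    (T m : ℕ) (hT : 1 ≤ T) (hm : 1 ≤ m)
    (L G σ Sw p γ ρmin γ' η ηbar ζ : ℝ)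
    (hL : 0 < L) (hG : 0 ≤ G) (hσ : 0 ≤ σ) (hSw : 0 ≤ Sw)
    (hp0 : 0 < p) (hp1 : p ≤ 1)
    (hγ0 : 0 ≤ γ) (hγ1 : γ < 1) (hγ' : γ' = 1 - γ)
    (hρ0 : 0 < ρmin) (hρ1 : ρmin ≤ 1)
    (hη : η = ρmin / Real.sqrt (4 * L * T))
    (hηbar : ηbar = 1 / Real.sqrt (4 * L * T))
    (hζ : ζ = (T : ℝ) ^ (-(3 / 8 : ℝ)))
    (F b a : ℕ → ℝ) (Fstar : ℝ)
    (hb : ∀ t, 1 ≤ t → t ≤ T → 0 ≤ b t)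
    (ha : ∀ t, 1 ≤ t → t ≤ T → 0 ≤ a t)
    (hFstar : ∀ t, t ≤ T → Fstar ≤ F t)
    (hdesc : ∀ t, 1 ≤ t → t ≤ T →
      F t ≤ F (t - 1) - η * γ' / 2 * b t + σ ^ 2 / (8 * m * T)
        + η * L ^ 2 / (2 * m) * a t + L * ζ ^ 2 / (2 * m ^ 2) * Sw)
    (hcons : ∀ t, 1 ≤ t → t ≤ T →
      a t ≤ 12 * m * G ^ 2 * ηbar ^ 2 / (p * ζ) ^ 2 + 2 * ζ * Sw / p) :
    (1 / T : ℝ) * ∑ t ∈ Finset.Icc 1 T, b t ≤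
      8 * Real.sqrt L * (F 0 - Fstar) / (γ' * ρmin * Real.sqrt T)
      + 3 * G ^ 2 * L / ((T : ℝ) ^ ((1 : ℝ) / 4) * p ^ 2 * γ')
      + Real.sqrt (L / (4 * T)) * σ ^ 2 / (m * γ' * ρmin)
      + Sw / (m * γ') *
          (2 * L ^ 2 / (p * (T : ℝ) ^ ((3 : ℝ) / 8))
            + 4 * L * Real.sqrt L / (m * (T : ℝ) ^ ((1 : ℝ) / 4) * ρmin)) := by
  have hgap : 0 ≤ F 0 - Fstar := sub_nonneg.mpr (hFstar 0 T.zero_le)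
  have hγ'0 : 0 < γ' := by linarith
  refine (async_dsgd_convergence_general T hT m L G σ Sw p γ ρmin γ' η ηbar ζ
    (Nat.cast_pos.mpr hm) hL hp0.ne' hγ1 hγ' hρ0 hη hηbar hζ F b a Fstar
    (hFstar T le_rfl) hdesc hcons).trans ?_
  gcongr <;> norm_num
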